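/- First-order singular matrix Darboux transformation: let 1 ≤ m < n, let V₀ = diag(V^{(I)}, V^{(II)}) be a smooth block-diagonal n×n real matrix-valued potential on an open interval with V^{(I)} of size m×m and V^{(II)} of size (n−m)×(n−m), let Λ̃ be a constant real m×m diagonal matrix, and let Ũ be a smooth m×m matrix-valued function with Ũ(x) invertible on the interval and satisfying −Ũ″ + V^{(I)}Ũ = ŨΛ̃. Set U = diag(Ũ, I_{n−m}) and L^{(m)} = D_m − (∂U)U⁻¹. If Ψ is a smooth n-vector-valued function satisfying −Ψ″ + V₀Ψ = EΨ for a real constant E, then Φ = L^{(m)}Ψ satisfies −Φ″ + V₁Φ = EΦ, where V₁ = diag(V^{(I)} − 2∂((∂Ũ)Ũ⁻¹), V^{(II)}). -/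

import Mathlib

open Matrix

noncomputable section

namespace SingularDarboux

variable {n : ℕ}

/-- Entrywise derivative `∂` of a matrix-valued function. -/
def matD (U : ℝ → Matrix (Fin n) (Fin n) ℝ) : ℝ → Matrix (Fin n) (Fin n) ℝ :=
  fun x => Matrix.of fun i j => deriv (fun t => U t i j) x

/-- The operator `D_m` acting on matrix-valued functions: it differentiates the
first `m` rows and keeps the remaining rows unchanged. -/
def matDm (m : ℕ) (U : ℝ → Matrix (Fin n) (Fin n) ℝ) : ℝ → Matrix (Fin n) (Fin n) ℝ :=
  fun x => Matrix.of fun i j => if (i : ℕ) < m then deriv (fun t => U t i j) x else U x i j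

/-- Entrywise derivative `∂` of a vector-valued function. -/
def vecD (Ψ : ℝ → Fin n → ℝ) : ℝ → Fin n → ℝ := fun x i => deriv (fun t => Ψ t i) x

/-- The operator `D_m` (equivalently `∂^{(m)}`) acting on vector-valued functions:
it differentiates the first `m` components and keeps the remaining ones unchanged. -/
def vecDm (m : ℕ) (Ψ : ℝ → Fin n → ℝ) : ℝ → Fin n → ℝ :=
  fun x i => if (i : ℕ) < m then deriv (fun t => Ψ t i) x else Ψ x i

/-- All entries of the matrix-valued function are smooth. -/
def SmoothMat (U : ℝ → Matrix (Fin n) (Fin n) ℝ) : Prop :=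
  ∀ i j, ContDiff ℝ (⊤ : ℕ∞) fun x => U x i j

/-- All components of the vector-valued function are smooth. -/
def SmoothVec (Ψ : ℝ → Fin n → ℝ) : Prop := ∀ i, ContDiff ℝ (⊤ : ℕ∞) fun x => Ψ x i

/-- `U = diag(Ũ, I_{n-m})`: outside of the top-left `m × m` block, `U` coincides with
the identity matrix. -/
def BlockDiag (m : ℕ) (U : ℝ → Matrix (Fin n) (Fin n) ℝ) : Prop :=
  ∀ (x : ℝ) (i j : Fin n), (m ≤ (i : ℕ) ∨ m ≤ (j : ℕ)) → U x i j = if i = j then 1 else 0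

/-- The `(r,k)` block (`r,k` $0$-indexed) of the matrix `W(U₁,…,U_M;U_{M+1},…,U_N)`. -/
def Wblock (m M r k : ℕ) (U : ℝ → Matrix (Fin n) (Fin n) ℝ) : ℝ → Matrix (Fin n) (Fin n) ℝ :=
  if k < M then (if r ≤ k then (matDm m)^[r] U else matD^[r] U)
  else (if r < M then (matDm m)^[r] U else matD^[r - M] ((matDm m)^[M] U))

/-- The `r`-th block of the column appended on the right in `W_j`. -/
def Wcol (m M r : ℕ) (Ψ : ℝ → Fin n → ℝ) : ℝ → Fin n → ℝ :=
  if r < M then (vecDm m)^[r] Ψ else vecD^[r - M] ((vecDm m)^[M] Ψ)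

/-- The `i`-th row of the `k`-th block of the row appended at the bottom in `W_j`
(also the replacement row used in `W_{i,j}`). -/
def Wrow (m M N k : ℕ) (U : ℝ → Matrix (Fin n) (Fin n) ℝ) (i : Fin n) : ℝ → Fin n → ℝ :=
  if k < M then (fun x => matD^[N] U x i) else (fun x => matD^[N - M] ((matDm m)^[M] U) x i)

/-- The `nN × nN` matrix `W(U₁,…,U_M;U_{M+1},…,U_N)`; rows are indexed by pairs
(block-row `r`, row `i` within the block) and similarly for columns. -/
def Wmat (m M N : ℕ) (U : ℕ → ℝ → Matrix (Fin n) (Fin n) ℝ) (x : ℝ) :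
    Matrix (Fin N × Fin n) (Fin N × Fin n) ℝ :=
  Matrix.of fun p q => Wblock m M (p.1 : ℕ) (q.1 : ℕ) (U (q.1 : ℕ)) x p.2 q.2

/-- The `(nN+1) × (nN+1)` matrix `W_j(U₁,…,U_M;U_{M+1},…,U_N,Ψ)`. -/
def WjMat (m M N : ℕ) (j : Fin n) (U : ℕ → ℝ → Matrix (Fin n) (Fin n) ℝ)
    (Ψ : ℝ → Fin n → ℝ) (x : ℝ) :
    Matrix ((Fin N × Fin n) ⊕ Unit) ((Fin N × Fin n) ⊕ Unit) ℝ :=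
  Matrix.of fun p q =>
    match p, q with
    | Sum.inl p, Sum.inl q => Wblock m M (p.1 : ℕ) (q.1 : ℕ) (U (q.1 : ℕ)) x p.2 q.2
    | Sum.inl p, Sum.inr _ => Wcol m M (p.1 : ℕ) Ψ x p.2
    | Sum.inr _, Sum.inl q => Wrow m M N (q.1 : ℕ) (U (q.1 : ℕ)) j x q.2
    | Sum.inr _, Sum.inr _ => vecD^[N - M] ((vecDm m)^[M] Ψ) x j

/-- The `nN × nN` matrix `W_{i,j}(U₁,…,U_M;U_{M+1},…,U_N)`: in the last block-row
(`r = N-1`) of `W` the `j`-th row of each block is replaced as prescribed. -/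
def WijMat (m M N : ℕ) (i j : Fin n) (U : ℕ → ℝ → Matrix (Fin n) (Fin n) ℝ) (x : ℝ) :
    Matrix (Fin N × Fin n) (Fin N × Fin n) ℝ :=
  Matrix.of fun p q =>
    if (p.1 : ℕ) = N - 1 ∧ p.2 = j then Wrow m M N (q.1 : ℕ) (U (q.1 : ℕ)) i x q.2
    else Wblock m M (p.1 : ℕ) (q.1 : ℕ) (U (q.1 : ℕ)) x p.2 q.2


/-- Entrywise derivative at a point. -/
def MD (A : ℝ → Matrix (Fin n) (Fin n) ℝ) (A' : Matrix (Fin n) (Fin n) ℝ) (x : ℝ) : Prop :=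
  ∀ i j, HasDerivAt (fun t => A t i j) (A' i j) x

/-- Componentwise derivative at a point. -/
def VD (v : ℝ → Fin n → ℝ) (v' : Fin n → ℝ) (x : ℝ) : Prop :=
  ∀ i, HasDerivAt (fun t => v t i) (v' i) x

theorem MD.mul {A B : ℝ → Matrix (Fin n) (Fin n) ℝ} {A' B' : Matrix (Fin n) (Fin n) ℝ} {x : ℝ}
    (hA : MD A A' x) (hB : MD B B' x) :
    MD (fun t => A t * B t) (A' * B x + A x * B') x := by
  intro i j
  simp only [Matrix.mul_apply, Matrix.add_apply, ← Finset.sum_add_distrib]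
  exact HasDerivAt.fun_sum fun k _ => (hA i k).mul (hB k j)

theorem MD.mulVec {A : ℝ → Matrix (Fin n) (Fin n) ℝ} {A' : Matrix (Fin n) (Fin n) ℝ}
    {v : ℝ → Fin n → ℝ} {v' : Fin n → ℝ} {x : ℝ}
    (hA : MD A A' x) (hB : VD v v' x) :
    VD (fun t => A t *ᵥ v t) (A' *ᵥ v x + A x *ᵥ v') x := by
  intro i
  simp only [Matrix.mulVec, dotProduct, Pi.add_apply, ← Finset.sum_add_distrib]
  exact HasDerivAt.fun_sum fun k _ => (hA i k).mul (hB k)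

theorem MD.const (A : Matrix (Fin n) (Fin n) ℝ) (x : ℝ) : MD (fun _ => A) 0 x :=
  fun _ _ => hasDerivAt_const _ _

theorem VD.add {v w : ℝ → Fin n → ℝ} {v' w' : Fin n → ℝ} {x : ℝ}
    (h : VD v v' x) (k : VD w w' x) : VD (fun t => v t + w t) (v' + w') x :=
  fun i => (h i).add (k i)

theorem VD.sub {v w : ℝ → Fin n → ℝ} {v' w' : Fin n → ℝ} {x : ℝ}
    (h : VD v v' x) (k : VD w w' x) : VD (fun t => v t - w t) (v' - w') x :=
  fun i => (h i).sub (k i)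

theorem VD.const_mulVec (A : Matrix (Fin n) (Fin n) ℝ) {v : ℝ → Fin n → ℝ} {v' : Fin n → ℝ}
    {x : ℝ} (h : VD v v' x) : VD (fun t => A *ᵥ v t) (A *ᵥ v') x := by
  simpa using (MD.const A x).mulVec h

theorem MD.add {A B : ℝ → Matrix (Fin n) (Fin n) ℝ} {A' B' : Matrix (Fin n) (Fin n) ℝ} {x : ℝ}
    (hA : MD A A' x) (hB : MD B B' x) : MD (fun t => A t + B t) (A' + B') x :=
  fun i j => (hA i j).add (hB i j)

theorem MD.sub {A B : ℝ → Matrix (Fin n) (Fin n) ℝ} {A' B' : Matrix (Fin n) (Fin n) ℝ} {x : ℝ}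
    (hA : MD A A' x) (hB : MD B B' x) : MD (fun t => A t - B t) (A' - B') x :=
  fun i j => (hA i j).sub (hB i j)

theorem MD.matD_eq {A : ℝ → Matrix (Fin n) (Fin n) ℝ} {A' : Matrix (Fin n) (Fin n) ℝ} {x : ℝ}
    (hA : MD A A' x) : matD A x = A' := by
  ext i j; exact (hA i j).deriv

theorem VD.vecD_eq {v : ℝ → Fin n → ℝ} {v' : Fin n → ℝ} {x : ℝ}
    (h : VD v v' x) : vecD v x = v' := by
  ext i; exact (h i).deriv

theorem VD.congr {v w : ℝ → Fin n → ℝ} {v' : Fin n → ℝ} {x : ℝ} {s : Set ℝ} (hs : s ∈ nhds x)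
    (h : VD v v' x) (e : ∀ t ∈ s, w t = v t) : VD w v' x := by
  intro i
  refine (h i).congr_of_eventuallyEq ?_
  filter_upwards [hs] with t ht
  rw [e t ht]

theorem MD.congr {v w : ℝ → Matrix (Fin n) (Fin n) ℝ} {v' : Matrix (Fin n) (Fin n) ℝ} {x : ℝ}
    {s : Set ℝ} (hs : s ∈ nhds x)
    (h : MD v v' x) (e : ∀ t ∈ s, w t = v t) : MD w v' x := by
  intro i j
  refine (h i j).congr_of_eventuallyEq ?_
  filter_upwards [hs] with t ht
  rw [e t ht]

theorem diff_det {A : ℝ → Matrix (Fin n) (Fin n) ℝ} {x : ℝ}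
    (h : ∀ i j, DifferentiableAt ℝ (fun t => A t i j) x) :
    DifferentiableAt ℝ (fun t => (A t).det) x := by
  simp only [Matrix.det_apply']
  refine DifferentiableAt.fun_sum fun σ _ => ?_
  refine DifferentiableAt.mul (differentiableAt_const _) ?_
  exact DifferentiableAt.fun_finsetProd fun i _ => h _ _

theorem MD.inv {A : ℝ → Matrix (Fin n) (Fin n) ℝ} {A' : Matrix (Fin n) (Fin n) ℝ} {x : ℝ}
    {s : Set ℝ} (hs : s ∈ nhds x) (hA : MD A A' x) (hu : ∀ t ∈ s, IsUnit (A t)) :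
    MD (fun t => (A t)⁻¹) (-((A x)⁻¹ * A' * (A x)⁻¹)) x := by
  have hd : ∀ i j, DifferentiableAt ℝ (fun t => (A t)⁻¹ i j) x := by
    intro i j
    have hx := (Matrix.isUnit_iff_isUnit_det _).1 (hu x (mem_of_mem_nhds hs))
    simp only [Matrix.inv_def, Ring.inverse_eq_inv', Matrix.smul_apply, smul_eq_mul,
      Matrix.adjugate_apply]
    refine DifferentiableAt.mul
      ((diff_det fun i j => (hA i j).differentiableAt).inv hx.ne_zero) (diff_det ?_)
    intro k l
    simp only [Matrix.updateRow_apply]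
    split_ifs
    · exact differentiableAt_const _
    · exact (hA k l).differentiableAt
  have hB : MD (fun t => (A t)⁻¹) (matD (fun t => (A t)⁻¹) x) x :=
    fun i j => (hd i j).hasDerivAt
  have h1 := (hA.mul hB).matD_eq
  have h2 : MD (fun t => A t * (A t)⁻¹) 0 x :=
    (MD.const 1 x).congr hs fun t ht =>
      Matrix.mul_nonsing_inv _ ((Matrix.isUnit_iff_isUnit_det _).1 (hu t ht))
  rw [h2.matD_eq] at h1
  have hx := (Matrix.isUnit_iff_isUnit_det _).1 (hu x (mem_of_mem_nhds hs))
  have h3 : matD (fun t => (A t)⁻¹) x = -((A x)⁻¹ * A' * (A x)⁻¹) := by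
    have h4 := congrArg (fun M => (A x)⁻¹ * M) h1
    simp only [mul_zero, mul_add, Matrix.nonsing_inv_mul_cancel_left _ _ hx] at h4
    rw [eq_neg_iff_add_eq_zero, add_comm, mul_assoc]
    exact h4.symm
  rwa [h3] at hB

theorem hasDeriv_two {f : ℝ → ℝ} {a b x : ℝ} (hf : ContDiffOn ℝ (⊤ : ℕ∞) f (Set.Ioo a b))
    (hx : x ∈ Set.Ioo a b) :
    HasDerivAt f (deriv f x) x ∧ HasDerivAt (deriv f) (deriv (deriv f) x) x := by
  have h1 := (contDiffOn_infty_iff_deriv_of_isOpen isOpen_Ioo).1 hf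
  have h2 := (contDiffOn_infty_iff_deriv_of_isOpen isOpen_Ioo).1 h1.2
  have hs := isOpen_Ioo.mem_nhds hx
  exact ⟨(h1.1.differentiableAt hs).hasDerivAt, (h2.1.differentiableAt hs).hasDerivAt⟩

/-- The projection onto the first `m` coordinates. -/
def PP (n m : ℕ) : Matrix (Fin n) (Fin n) ℝ :=
  Matrix.diagonal fun i => if (i : ℕ) < m then 1 else 0

theorem PP_comm {m : ℕ} {A : Matrix (Fin n) (Fin n) ℝ}
    (h : ∀ (i j : Fin n),
      (((i : ℕ) < m ∧ m ≤ (j : ℕ)) ∨ (m ≤ (i : ℕ) ∧ (j : ℕ) < m)) → A i j = 0) :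
    PP n m * A = A * PP n m := by
  ext i j
  simp only [PP, Matrix.diagonal_mul, Matrix.mul_diagonal]
  by_cases hi : (i : ℕ) < m <;> by_cases hj : (j : ℕ) < m <;> simp [hi, hj]
  · exact h i j (by omega)
  · exact (h i j (by omega)).symm

theorem alg {P V F S : Matrix (Fin n) (Fin n) ℝ} {E : ℝ} {p q : Fin n → ℝ}
    (hPP : P * P = P) (hPV : P * V = V * P) (hPF : P * F = F) (hFP : F * P = F)
    (hSP : S * P = S) (hPS : P * S = S) :
    (-(E • P) *ᵥ q + ((F * S - S * F) *ᵥ p + S *ᵥ q)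
      + (((P * V - S - F * F) * F + F * (P * V - S - F * F)) *ᵥ p + (F * F) *ᵥ q)
      - ((P * V - S - F * F) *ᵥ q + F *ᵥ ((V - E • 1) *ᵥ p))
      + (1 - P) *ᵥ ((V - E • 1) *ᵥ p)) =
    (V - (2 : ℝ) • (P * V - S - F * F) - E • 1) *ᵥ (P *ᵥ q - F *ᵥ p + (1 - P) *ᵥ p) := by
  have hVF : V * F = P * V * F := by rw [hPV, mul_assoc, hPF]
  have hFV : F * V = F * (P * V) := by rw [← mul_assoc, hFP]
  have key1 : -(E • P) + S + F * F - (P * V - S - F * F)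
      = (V - (2 : ℝ) • (P * V - S - F * F) - E • 1) * P := by
    have e1 : P * V * P = P * V := by rw [hPV, mul_assoc, hPP]
    have e2 : F * F * P = F * F := by rw [mul_assoc, hFP]
    simp only [sub_mul, smul_mul_assoc, one_mul, e1, e2, hSP, ← hPV]
    module
  have key2 : (F * S - S * F) + ((P * V - S - F * F) * F + F * (P * V - S - F * F))
      - F * (V - E • 1) + (1 - P) * (V - E • 1)
      = (V - (2 : ℝ) • (P * V - S - F * F) - E • 1) * ((1 - P) - F) := by
    have e1 : P * V * P = P * V := by rw [hPV, mul_assoc, hPP]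
    have e2 : F * F * P = F * F := by rw [mul_assoc, hFP]
    simp only [sub_mul, mul_sub, smul_mul_assoc, mul_smul_comm, one_mul, mul_one, e1, e2, hSP,
      ← hPV, hVF, hFV, mul_assoc F F F]
    module
  have h1 := congrArg (fun M => M *ᵥ q) key1
  have h2 := congrArg (fun M => M *ᵥ p) key2
  simp only [← Matrix.mulVec_mulVec, Matrix.add_mulVec, Matrix.sub_mulVec (A := 1 - P) (B := F),
    Matrix.mulVec_add, Matrix.mulVec_sub] at h1 h2 ⊢
  simp only [Matrix.sub_mulVec, Matrix.add_mulVec, ← Matrix.mulVec_mulVec, Matrix.mulVec_sub,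
    Matrix.mulVec_add] at h1 h2 ⊢
  linear_combination (exp := 1) h1 + h2

/-- First-order singular matrix Darboux transformation: for a block-diagonal
potential `V₀ = diag(V^{(I)}, V^{(II)})` and transformation matrix
`U = diag(Ũ, I_{n-m})` with `-Ũ'' + V^{(I)}Ũ = ŨΛ̃`, the function
`Φ = D_mΨ - (∂U)U⁻¹Ψ` solves `-Φ'' + V₁Φ = EΦ`, where
`V₁ = V₀ - 2∂((∂U)U⁻¹) = diag(V^{(I)} - 2∂((∂Ũ)Ũ⁻¹), V^{(II)})`. -/
theorem singular_darboux_transformation {n : ℕ} (m : ℕ) (hm : 1 ≤ m) (hmn : m < n)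
    (a b : ℝ)
    (V0 : ℝ → Matrix (Fin n) (Fin n) ℝ)
    (hV0smooth : ∀ i j, ContDiffOn ℝ (⊤ : ℕ∞) (fun x => V0 x i j) (Set.Ioo a b))
    (hV0blk : ∀ (x : ℝ) (i j : Fin n),
      (((i : ℕ) < m ∧ m ≤ (j : ℕ)) ∨ (m ≤ (i : ℕ) ∧ (j : ℕ) < m)) → V0 x i j = 0)
    (Λ : Matrix (Fin n) (Fin n) ℝ) (hΛ : Λ.IsDiag)
    (U : ℝ → Matrix (Fin n) (Fin n) ℝ)
    (hUsmooth : ∀ i j, ContDiffOn ℝ (⊤ : ℕ∞) (fun x => U x i j) (Set.Ioo a b))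
    (hUblk : BlockDiag m U)
    (hUinv : ∀ x ∈ Set.Ioo a b, IsUnit (U x))
    (hUeq : ∀ x ∈ Set.Ioo a b, ∀ i j : Fin n, (i : ℕ) < m → (j : ℕ) < m →
      (-matD (matD U) x + V0 x * U x) i j = (U x * Λ) i j)
    (V1 : ℝ → Matrix (Fin n) (Fin n) ℝ)
    (hV1 : ∀ x, V1 x = V0 x - (2 : ℝ) • matD (fun t => matD U t * (U t)⁻¹) x)
    (E : ℝ) (Ψ : ℝ → Fin n → ℝ)
    (hΨsmooth : ∀ i, ContDiffOn ℝ (⊤ : ℕ∞) (fun x => Ψ x i) (Set.Ioo a b))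
    (hΨeq : ∀ x ∈ Set.Ioo a b, -vecD (vecD Ψ) x + (V0 x).mulVec (Ψ x) = E • Ψ x)
    (Φ : ℝ → Fin n → ℝ)
    (hΦ : ∀ x, Φ x = vecDm m Ψ x - (matD U x * (U x)⁻¹).mulVec (Ψ x)) :
    ∀ x ∈ Set.Ioo a b, -vecD (vecD Φ) x + (V1 x).mulVec (Φ x) = E • Φ x := by
  have hs : ∀ x ∈ Set.Ioo a b, Set.Ioo a b ∈ nhds x := fun x hx => isOpen_Ioo.mem_nhds hx
  have hP2 : PP n m * PP n m = PP n m := by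
    simp [PP]
  have hPV : ∀ x, PP n m * V0 x = V0 x * PP n m := fun x => PP_comm (hV0blk x)
  have hPU : ∀ x, PP n m * U x = U x * PP n m := fun x => PP_comm (fun i j h => by
    rw [hUblk x i j (by omega), if_neg (by rintro rfl; omega)])
  have hPΛ : PP n m * Λ = Λ * PP n m := PP_comm (fun i j h => hΛ (by rintro rfl; omega))
  have hU1 : ∀ x ∈ Set.Ioo a b, MD U (matD U x) x := fun x hx i j =>
    (hasDeriv_two (hUsmooth i j) hx).1
  have hU2 : ∀ x ∈ Set.Ioo a b, MD (matD U) (matD (matD U) x) x := fun x hx i j =>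
    (hasDeriv_two (hUsmooth i j) hx).2
  have hΨ1 : ∀ x ∈ Set.Ioo a b, VD Ψ (vecD Ψ x) x := fun x hx i =>
    (hasDeriv_two (hΨsmooth i) hx).1
  have hΨ2 : ∀ x ∈ Set.Ioo a b, VD (vecD Ψ) ((V0 x - E • 1) *ᵥ Ψ x) x := by
    intro x hx
    have h : VD (vecD Ψ) (vecD (vecD Ψ) x) x := fun i => (hasDeriv_two (hΨsmooth i) hx).2
    have e : vecD (vecD Ψ) x = (V0 x - E • 1) *ᵥ Ψ x := by
      rw [Matrix.sub_mulVec, Matrix.smul_mulVec, Matrix.one_mulVec, ← hΨeq x hx]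
      abel
    rwa [e] at h
  have hdet : ∀ x ∈ Set.Ioo a b, IsUnit (U x).det := fun x hx =>
    (Matrix.isUnit_iff_isUnit_det _).1 (hUinv x hx)
  have hPW : ∀ x ∈ Set.Ioo a b, PP n m * (U x)⁻¹ = (U x)⁻¹ * PP n m := by
    intro x hx
    calc PP n m * (U x)⁻¹ = (U x)⁻¹ * (U x * PP n m) * (U x)⁻¹ := by
          rw [Matrix.nonsing_inv_mul_cancel_left _ _ (hdet x hx)]
      _ = _ := by
          rw [← hPU, ← mul_assoc, mul_assoc, Matrix.mul_nonsing_inv _ (hdet x hx), mul_one]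
  have hD0 : ∀ x (i j : Fin n), (m ≤ (i : ℕ) ∨ m ≤ (j : ℕ)) → matD U x i j = 0 := by
    intro x i j h
    have : (fun t => U t i j) = fun _ => if i = j then 1 else 0 := by
      funext t; exact hUblk t i j h
    simp [matD, this]
  have hDD0 : ∀ x (i j : Fin n), (m ≤ (i : ℕ) ∨ m ≤ (j : ℕ)) → matD (matD U) x i j = 0 := by
    intro x i j h
    have : (fun t => matD U t i j) = fun _ => 0 := by
      funext t; exact hD0 t i j h
    rw [matD, Matrix.of_apply, this]
    simp
  have hDP : ∀ x, matD U x * PP n m = matD U x := by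
    intro x; ext i j
    simp only [PP, Matrix.mul_diagonal]
    split_ifs with h
    · simp
    · rw [hD0 x i j (by omega)]; simp
  have hPD : ∀ x, PP n m * matD U x = matD U x := by
    intro x; ext i j
    simp only [PP, Matrix.diagonal_mul]
    split_ifs with h
    · simp
    · rw [hD0 x i j (by omega)]; simp
  have hUU : ∀ x ∈ Set.Ioo a b,
      matD (matD U) x = PP n m * V0 x * U x - U x * (PP n m * Λ) := by
    intro x hx
    have hA : PP n m * V0 x * U x = PP n m * (V0 x * U x) * PP n m := by
      calc PP n m * V0 x * U x = (PP n m * PP n m) * V0 x * U x := by rw [hP2]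
        _ = PP n m * (PP n m * V0 x) * U x := by simp only [mul_assoc]
        _ = PP n m * V0 x * (PP n m * U x) := by
          have := congrArg (fun M => PP n m * M * U x) (hPV x)
          simpa only [mul_assoc] using this
        _ = _ := by rw [hPU]; simp only [mul_assoc]
    have hB : U x * (PP n m * Λ) = PP n m * (U x * Λ) * PP n m := by
      calc U x * (PP n m * Λ) = U x * (PP n m * PP n m * Λ) := by rw [hP2]
        _ = (U x * PP n m) * (PP n m * Λ) := by simp only [mul_assoc]
        _ = _ := by rw [← hPU, hPΛ]; simp only [mul_assoc]
    rw [hA, hB]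
    ext i j
    simp only [PP, Matrix.sub_apply, Matrix.mul_diagonal, Matrix.diagonal_mul]
    by_cases hi : (i : ℕ) < m
    · by_cases hj : (j : ℕ) < m
      · have := hUeq x hx i j hi hj
        simp only [Matrix.add_apply, Matrix.neg_apply] at this
        simp only [hi, hj, if_true]
        linarith
      · rw [hDD0 x i j (by omega)]; simp [hj]
    · rw [hDD0 x i j (by omega)]; simp [hi]
  have hW : ∀ x ∈ Set.Ioo a b, MD (fun t => (U t)⁻¹) (-((U x)⁻¹ * matD U x * (U x)⁻¹)) x :=
    fun x hx => (hU1 x hx).inv (hs x hx) hUinv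
  obtain ⟨F, hF⟩ : ∃ F : ℝ → Matrix (Fin n) (Fin n) ℝ, F = fun t => matD U t * (U t)⁻¹ :=
    ⟨_, rfl⟩
  obtain ⟨S, hS⟩ : ∃ S : ℝ → Matrix (Fin n) (Fin n) ℝ,
    S = fun t => U t * (PP n m * Λ) * (U t)⁻¹ := ⟨_, rfl⟩
  have hFd : ∀ x ∈ Set.Ioo a b, MD F (PP n m * V0 x - S x - F x * F x) x := by
    intro x hx
    have h := (hU2 x hx).mul (hW x hx)
    rw [← hF] at h
    have e : matD (matD U) x * (U x)⁻¹ + matD U x * -((U x)⁻¹ * matD U x * (U x)⁻¹)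
        = PP n m * V0 x - S x - F x * F x := by
      rw [hUU x hx, hF, hS, sub_mul, Matrix.mul_nonsing_inv_cancel_right _ _ (hdet x hx), mul_neg,
        ← sub_eq_add_neg]
      simp only [mul_assoc]
    rwa [e] at h
  have hSd : ∀ x ∈ Set.Ioo a b, MD S (F x * S x - S x * F x) x := by
    intro x hx
    have h := ((hU1 x hx).mul (MD.const (PP n m * Λ) x)).mul (hW x hx)
    rw [← hS] at h
    have e : (matD U x * (PP n m * Λ) + U x * 0) * (U x)⁻¹
        + U x * (PP n m * Λ) * -((U x)⁻¹ * matD U x * (U x)⁻¹) = F x * S x - S x * F x := by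
      rw [hF, hS, mul_neg, ← sub_eq_add_neg, mul_zero, add_zero]
      simp only [mul_assoc, Matrix.nonsing_inv_mul_cancel_left _ _ (hdet x hx)]
    rwa [e] at h
  have hPF : ∀ x, PP n m * F x = F x := by
    intro x; rw [hF]; simp only [← mul_assoc, hPD]
  have hFP : ∀ x ∈ Set.Ioo a b, F x * PP n m = F x := by
    intro x hx; rw [hF]; simp only [mul_assoc]; rw [← hPW x hx, ← mul_assoc, hDP]
  have hPS : ∀ x, PP n m * S x = S x := by
    intro x; rw [hS]; simp only [← mul_assoc]
    rw [hPU, mul_assoc (U x), hP2]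
  have hSP : ∀ x ∈ Set.Ioo a b, S x * PP n m = S x := by
    intro x hx; rw [hS]; simp only [mul_assoc]
    rw [← hPW x hx, ← mul_assoc Λ, ← hPΛ, mul_assoc, ← mul_assoc (PP n m) (PP n m), hP2]
  have hΦ' : ∀ x, Φ x = PP n m *ᵥ vecD Ψ x - F x *ᵥ Ψ x + (1 - PP n m) *ᵥ Ψ x := by
    intro x
    rw [hΦ x, hF]
    ext i
    simp only [PP, Matrix.sub_mulVec, Matrix.one_mulVec, Pi.sub_apply, Pi.add_apply,
      Matrix.mulVec_diagonal, vecDm, vecD]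
    split_ifs <;> ring
  have hΦd : ∀ x ∈ Set.Ioo a b, VD Φ (-(E • PP n m) *ᵥ Ψ x + S x *ᵥ Ψ x + (F x * F x) *ᵥ Ψ x
      - F x *ᵥ vecD Ψ x + (1 - PP n m) *ᵥ vecD Ψ x) x := by
    intro x hx
    have h := (((hΨ2 x hx).const_mulVec (PP n m)).sub ((hFd x hx).mulVec (hΨ1 x hx))).add
      ((hΨ1 x hx).const_mulVec (1 - PP n m))
    rw [show Φ = _ from funext hΦ']
    convert h using 1
    simp only [Matrix.sub_mulVec, Matrix.mulVec_sub, Matrix.mulVec_mulVec, Matrix.neg_mulVec,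
      Matrix.smul_mulVec, Matrix.one_mulVec, Matrix.mulVec_smul]
    abel
  intro x hx
  have h2 := (((((hΨ1 x hx).const_mulVec (-(E • PP n m))).add
    ((hSd x hx).mulVec (hΨ1 x hx))).add
    (((hFd x hx).mul (hFd x hx)).mulVec (hΨ1 x hx))).sub
    ((hFd x hx).mulVec (hΨ2 x hx))).add ((hΨ2 x hx).const_mulVec (1 - PP n m))
  have h3 : VD (vecD Φ) _ x := h2.congr (hs x hx) (fun t ht => (hΦd t ht).vecD_eq)
  rw [h3.vecD_eq, alg hP2 (hPV x) (hPF x) (hFP x hx) (hSP x hx) (hPS x), ← hΦ' x, hV1 x, ← hF,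
    (hFd x hx).matD_eq, Matrix.sub_mulVec _ (E • 1), Matrix.smul_mulVec, Matrix.one_mulVec]
  abel

end SingularDarboux
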